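/- arXiv:2603.19015 — 2 statements merged into one kernel-verified Lean document; each statement's English description precedes it below -/
import Mathlib

section
/- Let a > 0, ρ > 0, L > 0 and v_L be real numbers, and let B, C be real numbers satisfying the subsonic condition |√2·v_L + C| < √2·a together with the two equilibrium equations a²·ρ·(π/(2L))·C = (√2·v_L + C)·(π/(2·√2·L))·B and (√2·v_L + C)·(π/(2·√2·L))·C = (1/ρ)·(π/(2L))·B. Then B = 0 and C = 0. -/
/-!
With `w = √2 v_L + C`, clearing the common factor `π / (2√2 L)` turns the equilibrium equations
into the linear system `√2 a² ρ C = w B`, `ρ w C = √2 B` in `(B, C)`. Eliminating `B` gives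
`ρ (2a² - w²) C = 0`, and the subsonic condition is exactly `w² < 2a²`, so `C = 0` and then `B = 0`.
-/

open Real

/-- In the quarter-wave model at steady conditions with zero pipe friction, under
the subsonic condition |√2·v_L + C| < √2·a the only acoustic equilibrium is the
trivial one B = 0 and C = 0. -/
theorem quarter_wave_trivial_equilibrium
    (a ρ L v_L B C : ℝ) (ha : 0 < a) (hρ : 0 < ρ) (hL : 0 < L)
    (hsub : |Real.sqrt 2 * v_L + C| < Real.sqrt 2 * a)
    (heq1 : a ^ 2 * ρ * (π / (2 * L)) * C
      = (Real.sqrt 2 * v_L + C) * (π / (2 * Real.sqrt 2 * L)) * B)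
    (heq2 : (Real.sqrt 2 * v_L + C) * (π / (2 * Real.sqrt 2 * L)) * C
      = (1 / ρ) * (π / (2 * L)) * B) :
    B = 0 ∧ C = 0 := by
  have hs : 0 < Real.sqrt 2 := by positivity
  have hs2 : Real.sqrt 2 ^ 2 = 2 := Real.sq_sqrt (by norm_num)
  have hπ := Real.pi_pos
  -- `w` is `√2` times the effective flow velocity; subsonic means `w² < 2a²`.
  generalize Real.sqrt 2 * v_L + C = w at hsub heq1 heq2
  generalize Real.sqrt 2 = s at hs hs2 hsub heq1 heq2
  have hw : w ^ 2 < 2 * a ^ 2 := by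
    have h := sq_lt_sq' (abs_lt.mp hsub).1 (abs_lt.mp hsub).2
    rwa [mul_pow, hs2] at h
  -- The equilibrium equations with the common factor `π / (2 * s * L)` cleared.
  have h1 : a ^ 2 * ρ * s * C = w * B := by
    have hk : π / (2 * s * L) ≠ 0 := by positivity
    apply mul_left_cancel₀ hk
    calc π / (2 * s * L) * (a ^ 2 * ρ * s * C)
        = a ^ 2 * ρ * (π / (2 * L)) * C := by field_simp
      _ = π / (2 * s * L) * (w * B) := by rw [heq1]; ring
  have h2 : ρ * w * C = s * B := by
    have hk : π / (2 * s * L) ≠ 0 := by positivity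
    apply mul_left_cancel₀ hk
    calc π / (2 * s * L) * (ρ * w * C)
        = ρ * (w * (π / (2 * s * L)) * C) := by ring
      _ = π / (2 * s * L) * (s * B) := by rw [heq2]; field_simp
  -- Eliminating `B` leaves a nonzero multiple of `C`.
  have h3 : ρ * (2 * a ^ 2 - w ^ 2) * C = 0 := by
    linear_combination s * h1 - w * h2 - a ^ 2 * ρ * C * hs2
  have hC : C = 0 :=
    (mul_eq_zero.mp h3).resolve_left (mul_pos hρ (sub_pos.mpr hw)).ne'
  refine ⟨?_, hC⟩
  rw [hC, mul_zero] at h2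
  exact (mul_eq_zero.mp h2.symm).resolve_left hs.ne'
end

section
/- Let D > 0, φ ∈ (0, π/2), and k > 0, ρ > 0, C > 0, x_pre > 0 be real numbers, define A_ft(x) = π·x·sin φ·(D − x·cos φ·sin φ), and let A_eff : ℝ → ℝ be continuously differentiable with A_eff(0) > 0. Define h(x) = k·ρ·C²·(x_pre + x)·A_ft(x)²/A_eff(x). Then there exists δ > 0 such that A_eff > 0 on [0, δ] and h is strictly monotonically increasing on [0, δ] with h(0) = 0; consequently, for every real ṁ with 0 < ṁ² < h(δ) there exists a unique x_e ∈ (0, δ) such that h(x_e) = ṁ². In other words, a unique branch of small-lift dynamic equilibria x_e(ṁ) emerges from the closed-valve state at set pressure. -/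
open Real

/-!
Near zero lift, `h x = x² N x / A_eff x` with `N` a polynomial and `N 0 > 0`. By the quotient rule
`h' x = x B x / (A_eff x)²`, where `B x = (x N' x + 2 N x) A_eff x - x N x A_eff' x` is continuous
(this is where `A_eff` being `C¹` enters) and `B 0 = 2 N 0 A_eff 0 > 0`. Hence `A_eff` and `B` are
both positive on some `[0, δ]`, so `h` is strictly increasing there. Existence of the equilibrium
lift is the intermediate value theorem, and uniqueness is injectivity of a strictly monotone map.
-/

/-- A unique branch of small-lift dynamic equilibria emerges from the closed-valve
state: for a conical valve there is δ > 0 with A_eff > 0 on [0, δ] such that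
h(x) = kρC²(x_pre + x)A_ft(x)²/A_eff(x) is strictly increasing on [0, δ] with
h(0) = 0, and for each mass inflow ṁ with 0 < ṁ² < h(δ) there is a unique
equilibrium lift x_e ∈ (0, δ) with h(x_e) = ṁ². -/
theorem small_lift_equilibrium_branch
    (D φ k ρ C x_pre : ℝ)
    (hD : 0 < D) (hφ : φ ∈ Set.Ioo (0 : ℝ) (π / 2))
    (hk : 0 < k) (hρ : 0 < ρ) (hC : 0 < C) (hxpre : 0 < x_pre)
    (A_ft : ℝ → ℝ)
    (hft : ∀ x : ℝ, A_ft x = π * x * Real.sin φ * (D - x * Real.cos φ * Real.sin φ))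
    (A_eff : ℝ → ℝ) (hAeff : ContDiff ℝ 1 A_eff) (hAeff0 : 0 < A_eff 0)
    (h : ℝ → ℝ)
    (hh : ∀ x : ℝ, h x = k * ρ * C ^ 2 * (x_pre + x) * A_ft x ^ 2 / A_eff x) :
    ∃ δ : ℝ, 0 < δ ∧
      (∀ x ∈ Set.Icc (0 : ℝ) δ, 0 < A_eff x) ∧
      StrictMonoOn h (Set.Icc (0 : ℝ) δ) ∧
      h 0 = 0 ∧
      ∀ m : ℝ, 0 < m ^ 2 → m ^ 2 < h δ →
        ∃! x : ℝ, x ∈ Set.Ioo (0 : ℝ) δ ∧ h x = m ^ 2 := by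
  have hs : 0 < Real.sin φ := Real.sin_pos_of_pos_of_lt_pi hφ.1 (by linarith [hφ.2, Real.pi_pos])
  obtain ⟨b, hb⟩ : ∃ b, b = Real.cos φ * Real.sin φ := ⟨_, rfl⟩
  obtain ⟨c, hc⟩ : ∃ c, c = k * ρ * C ^ 2 * (π * Real.sin φ) ^ 2 := ⟨_, rfl⟩
  have hcpos : 0 < c := by rw [hc]; positivity
  obtain ⟨N, hN⟩ : ∃ N : ℝ → ℝ, N = fun x => c * (x_pre + x) * (D - x * b) ^ 2 := ⟨_, rfl⟩
  obtain ⟨N', hN'⟩ : ∃ N' : ℝ → ℝ,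
      N' = fun x => c * (D - x * b) ^ 2 - 2 * c * b * (x_pre + x) * (D - x * b) := ⟨_, rfl⟩
  have hNd : ∀ x, HasDerivAt N (N' x) x := by
    intro x
    have h1 : HasDerivAt (fun x : ℝ => c * (x_pre + x)) (c * 1) x :=
      ((hasDerivAt_id x).const_add x_pre).const_mul c
    have h2 : HasDerivAt (fun x : ℝ => D - x * b) (-(1 * b)) x :=
      ((hasDerivAt_id x).mul_const b).const_sub D
    rw [hN, hN']
    refine (h1.mul (h2.pow 2)).congr_deriv ?_
    simp only [Pi.pow_apply]
    push_cast
    ring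
  have hform : h = fun x => x ^ 2 * N x / A_eff x := by
    funext x
    rw [hh, hft, hN, hb, hc]
    ring
  have hA' : Continuous (deriv A_eff) := hAeff.continuous_deriv (by norm_num)
  have hAd : ∀ x, HasDerivAt A_eff (deriv A_eff x) x := fun x =>
    (hAeff.differentiable (by norm_num) x).hasDerivAt
  have hAc : Continuous A_eff := hAeff.continuous
  have hNc : Continuous N := by rw [hN]; fun_prop
  have hN'c : Continuous N' := by rw [hN']; fun_prop
  obtain ⟨B, hB⟩ : ∃ B : ℝ → ℝ,
      B = fun x => (x * N' x + 2 * N x) * A_eff x - x * N x * deriv A_eff x := ⟨_, rfl⟩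
  have hBc : Continuous B := by rw [hB]; fun_prop
  have hB0 : 0 < B 0 := by
    have hN0 : 0 < N 0 := by
      rw [hN]
      simp only [add_zero, zero_mul, sub_zero]
      positivity
    rw [hB]
    simp only [zero_mul, zero_add, sub_zero]
    positivity
  have hev : ∀ᶠ x in nhds (0 : ℝ), 0 < A_eff x ∧ 0 < B x :=
    (hAc.continuousAt.eventually (lt_mem_nhds hAeff0)).and
      (hBc.continuousAt.eventually (lt_mem_nhds hB0))
  obtain ⟨ε, hε, hball⟩ := Metric.eventually_nhds_iff.mp hev
  have hpos : ∀ x ∈ Set.Icc (0 : ℝ) (ε / 2), 0 < A_eff x ∧ 0 < B x := by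
    intro x hx
    apply hball
    rw [Real.dist_eq, sub_zero, abs_of_nonneg hx.1]
    linarith [hx.2]
  have hδ : 0 < ε / 2 := by positivity
  have hcont : ContinuousOn h (Set.Icc (0 : ℝ) (ε / 2)) := by
    rw [hform]
    exact ((continuous_pow 2).mul hNc).continuousOn.div hAc.continuousOn
      fun x hx => (hpos x hx).1.ne'
  have hmono : StrictMonoOn h (Set.Icc (0 : ℝ) (ε / 2)) := by
    refine strictMonoOn_of_deriv_pos (convex_Icc _ _) hcont fun x hx => ?_
    rw [interior_Icc] at hx
    obtain ⟨hAx, hBx⟩ := hpos x (Set.Ioo_subset_Icc_self hx)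
    have hd : HasDerivAt h (x * B x / A_eff x ^ 2) x := by
      rw [hform]
      refine (((hasDerivAt_pow 2 x).mul (hNd x)).div (hAd x) hAx.ne').congr_deriv ?_
      rw [hB]
      simp only [Pi.mul_apply]
      push_cast
      ring
    rw [hd.deriv]
    have := hx.1
    positivity
  have h0 : h 0 = 0 := by rw [hform]; simp
  refine ⟨ε / 2, hδ, fun x hx => (hpos x hx).1, hmono, h0, fun m hm hmδ => ?_⟩
  obtain ⟨x, hx, hxm⟩ := intermediate_value_Ioo hδ.le hcont ⟨by rwa [h0], hmδ⟩
  refine ⟨x, ⟨hx, hxm⟩, fun y hy => ?_⟩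
  exact hmono.injOn (Set.Ioo_subset_Icc_self hy.1) (Set.Ioo_subset_Icc_self hx) (hy.2.trans hxm.symm)
end
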